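/- arXiv:1606.09389 — 2 statements merged into one kernel-verified Lean document; each statement's English description precedes it below -/
import Mathlib

section
/- Let G be a finite Eulerian graph (every vertex has even degree) whose number of edges is odd. Then G has no cyclic interval t-coloring for any even positive integer t. -/
open SimpleGraph

/-- The set of colors appearing on edges incident to `v` under the edge coloring `c`. -/
def colorsAt {V : Type*} (G : SimpleGraph V) (c : Sym2 V → ℕ) (v : V) : Set ℕ :=
  c '' (G.incidenceSet v)

/-- A set of natural numbers is an interval of consecutive integers. -/
def IsIntervalSet (S : Set ℕ) : Prop := ∃ a b : ℕ, S = Set.Icc a b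

/-- A proper edge coloring of `G` with colors `1, …, t`: every edge gets a color in
`{1, …, t}` and distinct edges sharing a vertex get distinct colors. -/
def IsProperEdgeColoring {V : Type*} (G : SimpleGraph V) (t : ℕ) (c : Sym2 V → ℕ) : Prop :=
  (∀ e ∈ G.edgeSet, c e ∈ Set.Icc 1 t) ∧
  ∀ e₁ ∈ G.edgeSet, ∀ e₂ ∈ G.edgeSet, e₁ ≠ e₂ → (∃ v, v ∈ e₁ ∧ v ∈ e₂) → c e₁ ≠ c e₂

/-- A cyclic interval `t`-coloring of `G`: a proper edge coloring with colors `1, …, t`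
such that at every vertex the set of incident colors, or its complement in `{1, …, t}`,
is an interval of consecutive integers. -/
def IsCyclicIntervalColoring {V : Type*} (G : SimpleGraph V) (t : ℕ) (c : Sym2 V → ℕ) : Prop :=
  IsProperEdgeColoring G t c ∧
  ∀ v : V, IsIntervalSet (colorsAt G c v) ∨ IsIntervalSet (Set.Icc 1 t \ colorsAt G c v)

/-!
Give an edge `e` of color `c e` the sign `(-1) ^ c e`. The colors at a vertex form, up to
complementation in `{1, …, t}`, an interval; as the degree and `t` are even, that interval has an
even number of elements, so the signs at every vertex cancel. Summing over all vertices counts every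
edge twice, hence the signs of all edges cancel too, and a vanishing sum of signs has an even number
of terms.
-/

namespace IsIntervalSet

variable {R : Type*} [Ring R] {S T : Finset ℕ}

theorem sum_neg_one_pow_eq_zero (hS : IsIntervalSet (S : Set ℕ)) (hcard : Even S.card) :
    ∑ x ∈ S, (-1 : R) ^ x = 0 := by
  obtain ⟨a, b, hab⟩ := hS
  obtain rfl : S = Finset.Icc a b := Finset.coe_injective (by rw [hab, Finset.coe_Icc])
  rw [Nat.card_Icc] at hcard
  rw [← Finset.Ico_add_one_right_eq_Icc, Finset.sum_Ico_eq_sum_range]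
  simp only [pow_add (-1 : R) a, ← Finset.mul_sum, neg_one_geom_sum, if_pos hcard, mul_zero]

theorem sum_neg_one_pow_eq_zero_of_sdiff (hT : IsIntervalSet (T : Set ℕ)) (hTcard : Even T.card)
    (hST : S ⊆ T) (hScard : Even S.card) (hdiff : IsIntervalSet (T \ S : Set ℕ)) :
    ∑ x ∈ S, (-1 : R) ^ x = 0 := by
  rw [← Finset.coe_sdiff] at hdiff
  have hdiffcard : Even (T \ S).card :=
    Finset.card_sdiff_of_subset hST ▸ hTcard.tsub hScard
  have hsum := Finset.sum_sdiff hST (f := fun x ↦ (-1 : R) ^ x)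
  rwa [hT.sum_neg_one_pow_eq_zero hTcard, hdiff.sum_neg_one_pow_eq_zero hdiffcard, zero_add] at hsum

end IsIntervalSet

theorem even_card_of_sum_neg_one_pow_eq_zero {ι : Type*} {s : Finset ι} {f : ι → ℕ}
    (h : ∑ i ∈ s, (-1 : ℤ) ^ f i = 0) : Even s.card := by
  have heven : Even (∑ i ∈ s, (1 - (-1 : ℤ) ^ f i)) :=
    Finset.even_sum _ fun _ _ ↦ odd_one.sub_odd odd_neg_one.pow
  rw [Finset.sum_sub_distrib, h, sub_zero, Finset.sum_const, nsmul_one] at heven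
  exact_mod_cast heven

section

variable {V : Type*} {G : SimpleGraph V} {t : ℕ} {c : Sym2 V → ℕ}

theorem sum_sum_incidenceFinset_eq_two_nsmul [DecidableEq V] [G.LocallyFinite] [Fintype G.edgeSet]
    {M : Type*} [AddCommMonoid M] {s : Finset V} (hs : G.support ⊆ s) (f : Sym2 V → M) :
    ∑ v ∈ s, ∑ e ∈ G.incidenceFinset v, f e = 2 • ∑ e ∈ G.edgeFinset, f e := by
  have mem_s {v : V} {e : Sym2 V} (he : e ∈ G.edgeSet) (hv : v ∈ e) : v ∈ s := by
    obtain ⟨w, rfl⟩ := hv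
    exact hs ⟨w, he⟩
  calc ∑ v ∈ s, ∑ e ∈ G.incidenceFinset v, f e
      = ∑ e ∈ G.edgeFinset, ∑ _v ∈ e.toFinset, f e := by
        refine Finset.sum_comm' fun v e ↦ ?_
        rw [mem_incidenceFinset, mem_edgeFinset, Sym2.mem_toFinset]
        exact ⟨fun ⟨_, he, hv⟩ ↦ ⟨hv, he⟩, fun ⟨hv, he⟩ ↦ ⟨mem_s he hv, he, hv⟩⟩
    _ = ∑ e ∈ G.edgeFinset, 2 • f e := Finset.sum_congr rfl fun e he ↦ by
        rw [Finset.sum_const,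
          Sym2.card_toFinset_of_not_isDiag e (G.not_isDiag_of_mem_edgeFinset he)]
    _ = 2 • ∑ e ∈ G.edgeFinset, f e := Finset.sum_nsmul _ _ _

theorem IsProperEdgeColoring.injOn_incidenceSet (hc : IsProperEdgeColoring G t c) (v : V) :
    Set.InjOn c (G.incidenceSet v) := fun e₁ h₁ e₂ h₂ heq ↦ by
  by_contra hne
  exact hc.2 e₁ h₁.1 e₂ h₂.1 hne ⟨v, h₁.2, h₂.2⟩ heq

theorem IsProperEdgeColoring.colorsAt_subset_Icc (hc : IsProperEdgeColoring G t c) (v : V) :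
    colorsAt G c v ⊆ Set.Icc 1 t :=
  Set.image_subset_iff.2 fun e he ↦ hc.1 e he.1

theorem coe_image_incidenceFinset [DecidableEq V] (v : V) [Fintype (G.neighborSet v)] :
    ((G.incidenceFinset v).image c : Set ℕ) = colorsAt G c v := by
  rw [Finset.coe_image, coe_incidenceFinset, colorsAt]

namespace IsCyclicIntervalColoring

theorem sum_incidenceFinset_neg_one_pow_eq_zero [DecidableEq V] {R : Type*} [Ring R]
    (hc : IsCyclicIntervalColoring G t c) (ht : Even t) {v : V} [Fintype (G.neighborSet v)]
    (hv : Even (G.degree v)) : ∑ e ∈ G.incidenceFinset v, (-1 : R) ^ c e = 0 := by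
  obtain ⟨hproper, hinterval⟩ := hc
  have hinj : Set.InjOn c (G.incidenceFinset v) :=
    G.coe_incidenceFinset v ▸ hproper.injOn_incidenceSet v
  have hcard : Even ((G.incidenceFinset v).image c).card := by
    rwa [Finset.card_image_of_injOn hinj, card_incidenceFinset_eq_degree]
  have hsubset : (G.incidenceFinset v).image c ⊆ Finset.Icc 1 t := by
    rw [← Finset.coe_subset, coe_image_incidenceFinset, Finset.coe_Icc]
    exact hproper.colorsAt_subset_Icc v
  specialize hinterval v
  rw [← coe_image_incidenceFinset, ← Finset.coe_Icc] at hinterval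
  rw [← Finset.sum_image (f := fun x ↦ (-1 : R) ^ x) hinj]
  rcases hinterval with hcolors | hmissing
  · exact hcolors.sum_neg_one_pow_eq_zero hcard
  · exact IsIntervalSet.sum_neg_one_pow_eq_zero_of_sdiff ⟨1, t, Finset.coe_Icc 1 t⟩
      (by rwa [Nat.card_Icc, Nat.add_sub_cancel]) hsubset hcard hmissing

theorem sum_edgeFinset_neg_one_pow_eq_zero [G.LocallyFinite] [Fintype G.edgeSet]
    {R : Type*} [Ring R] [IsAddTorsionFree R] (hc : IsCyclicIntervalColoring G t c) (ht : Even t)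
    (heul : ∀ v, Even (G.degree v)) : ∑ e ∈ G.edgeFinset, (-1 : R) ^ c e = 0 := by
  classical
  have hsupport : G.support ⊆ G.edgeFinset.biUnion Sym2.toFinset := fun v ⟨w, hvw⟩ ↦
    Finset.mem_coe.2 <| Finset.mem_biUnion.2 ⟨s(v, w), mem_edgeFinset.2 hvw, by simp⟩
  have hdouble := sum_sum_incidenceFinset_eq_two_nsmul hsupport fun e ↦ (-1 : R) ^ c e
  rw [Finset.sum_eq_zero fun v _ ↦ hc.sum_incidenceFinset_neg_one_pow_eq_zero ht (heul v)]
    at hdouble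
  exact (nsmul_eq_zero_iff_right two_ne_zero).1 hdouble.symm

end IsCyclicIntervalColoring

end

theorem stmt_15_general {V : Type*} (G : SimpleGraph V) [G.LocallyFinite] [Fintype G.edgeSet]
    (heul : ∀ v : V, Even (G.degree v)) (hodd : Odd G.edgeFinset.card) (t : ℕ) (ht : Even t) :
    ¬ ∃ c : Sym2 V → ℕ, IsCyclicIntervalColoring G t c := by
  rintro ⟨c, hc⟩
  have hsum : ∑ e ∈ G.edgeFinset, (-1 : ℤ) ^ c e = 0 :=
    hc.sum_edgeFinset_neg_one_pow_eq_zero ht heul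
  exact Nat.not_even_iff_odd.2 hodd (even_card_of_sum_neg_one_pow_eq_zero hsum)

/-- a finite Eulerian graph with an odd number of edges has no cyclic
interval `t`-coloring for any even positive integer `t`. -/
theorem stmt_15 {V : Type*} [Fintype V] [DecidableEq V] (G : SimpleGraph V)
    [DecidableRel G.Adj] (heul : ∀ v : V, Even (G.degree v))
    (hodd : Odd G.edgeFinset.card) :
    ∀ t : ℕ, 0 < t → Even t → ¬ ∃ c : Sym2 V → ℕ, IsCyclicIntervalColoring G t c :=
  fun t _ ht ↦ stmt_15_general G heul hodd t ht
end

section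
/- The friendship graph F₃, consisting of three triangles that pairwise share exactly one common vertex v (so F₃ has 7 vertices, 9 edges, v has degree 6 and all other vertices have degree 2), has a cyclic interval 7-coloring. -/
open SimpleGraph

/-- The friendship graph `F₃`: three triangles `{0,1,2}`, `{0,3,4}`, `{0,5,6}` pairwise
sharing exactly the common vertex `0`. -/
def friendshipF3 : SimpleGraph (Fin 7) :=
  SimpleGraph.fromEdgeSet
    {s(0, 1), s(0, 2), s(1, 2), s(0, 3), s(0, 4), s(3, 4), s(0, 5), s(0, 6), s(5, 6)}

/-!
If the two edges of a triangle at the center have colors `i` and `i + 2` and the third edge has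
color `i + 1`, then the other two vertices of the triangle see the intervals `{i, i + 1}` and
`{i + 1, i + 2}`. With `i = 1, 2, 5` the center sees `{1, 3} ∪ {2, 4} ∪ {5, 7}`, whose complement
in `{1, …, 7}` is the interval `{6}`.
-/

section EdgeColoring

variable {V : Type*}

theorem isProperEdgeColoring_iff_injOn_neighborSet {G : SimpleGraph V} {t : ℕ} {c : Sym2 V → ℕ} :
    IsProperEdgeColoring G t c ↔
      (∀ u v, G.Adj u v → c s(u, v) ∈ Set.Icc 1 t) ∧
        ∀ v, Set.InjOn (fun w ↦ c s(v, w)) (G.neighborSet v) := by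
  refine and_congr Sym2.forall ⟨fun hne v x hx y hy hxy ↦ ?_, ?_⟩
  · by_contra hxy'
    exact hne s(v, x) hx s(v, y) hy (mt Sym2.congr_right.1 hxy') ⟨v, by simp⟩ hxy
  · rintro hinj _ he₁ _ he₂ hne ⟨v, ⟨x, rfl⟩, ⟨y, rfl⟩⟩ hxy
    exact hne (congrArg (s(v, ·)) (hinj v he₁ he₂ hxy))

variable (G : SimpleGraph V) (c : Sym2 V → ℕ)

theorem colorsAt_eq_image_neighborSet (v : V) :
    colorsAt G c v = (fun w ↦ c s(v, w)) '' G.neighborSet v := by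
  have incidenceSet_eq : G.incidenceSet v = (s(v, ·)) '' G.neighborSet v := by
    ext e
    constructor
    · rintro ⟨he, w, rfl⟩
      exact ⟨w, he, rfl⟩
    · rintro ⟨w, hw, rfl⟩
      exact (G.mem_incidenceSet v w).2 hw
  rw [colorsAt, incidenceSet_eq, Set.image_image]

theorem colorsAt_eq_coe_image_neighborFinset (v : V) [Fintype (G.neighborSet v)] :
    colorsAt G c v = ((G.neighborFinset v).image fun w ↦ c s(v, w) : Finset ℕ) := by
  rw [colorsAt_eq_image_neighborSet, Finset.coe_image, coe_neighborFinset]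

end EdgeColoring

instance : DecidableRel friendshipF3.Adj :=
  inferInstanceAs <| DecidableRel (fromEdgeSet _).Adj

/-- The colors of the edges joining the center `0` of `F₃` to its other vertices: the two such
edges of a triangle get colors `i` and `i + 2`. The entry at `0` is a placeholder chosen so that
the color of the edge `s(0, v)` is `spokeColor 0 + spokeColor v`. -/
def spokeColor : Fin 7 → ℕ := ![0, 1, 3, 2, 4, 5, 7]

/-- The edge coloring of `F₃` extending `spokeColor`: the edge opposite the center in each triangle
gets the mean of the colors of the other two edges. -/
def friendshipF3Coloring : Sym2 (Fin 7) → ℕ :=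
  Sym2.lift ⟨fun u v ↦
    if u = 0 ∨ v = 0 then spokeColor u + spokeColor v else (spokeColor u + spokeColor v) / 2,
    fun u v ↦ by simp only [or_comm, add_comm]⟩

theorem isProperEdgeColoring_friendshipF3Coloring :
    IsProperEdgeColoring friendshipF3 7 friendshipF3Coloring := by
  rw [isProperEdgeColoring_iff_injOn_neighborSet]
  constructor
  · simp only [Set.mem_Icc]
    decide
  · simp only [Set.InjOn, mem_neighborSet]
    decide

theorem colorsAt_friendshipF3Coloring_zero :
    colorsAt friendshipF3 friendshipF3Coloring 0 = Set.Icc 1 7 \ {6} := by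
  have image_eq : (friendshipF3.neighborFinset 0).image (fun w ↦ friendshipF3Coloring s(0, w)) =
      Finset.Icc 1 7 \ {6} := by decide
  rw [colorsAt_eq_coe_image_neighborFinset, image_eq, Finset.coe_sdiff,
    Finset.coe_Icc, Finset.coe_singleton]

theorem exists_colorsAt_friendshipF3Coloring_eq_Icc {v : Fin 7} (hv : v ≠ 0) :
    ∃ k, colorsAt friendshipF3 friendshipF3Coloring v = Set.Icc k (k + 1) := by
  have exists_image_eq : ∀ v ≠ 0, ∃ k ∈ Finset.range 7,
      (friendshipF3.neighborFinset v).image (fun w ↦ friendshipF3Coloring s(v, w)) =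
        Finset.Icc k (k + 1) := by decide
  obtain ⟨k, -, hk⟩ := exists_image_eq v hv
  exact ⟨k, by rw [colorsAt_eq_coe_image_neighborFinset, hk, Finset.coe_Icc]⟩

/-- the friendship graph `F₃` has a cyclic interval `7`-coloring. -/
theorem stmt_18 :
    ∃ c : Sym2 (Fin 7) → ℕ, IsCyclicIntervalColoring friendshipF3 7 c := by
  refine ⟨friendshipF3Coloring, isProperEdgeColoring_friendshipF3Coloring, fun v ↦ ?_⟩
  obtain rfl | hv := eq_or_ne v 0
  · right
    have six_subset : ({6} : Set ℕ) ⊆ Set.Icc 1 7 := by simp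
    exact ⟨6, 6, by rw [colorsAt_friendshipF3Coloring_zero,
      Set.sdiff_sdiff_cancel_left six_subset, Set.Icc_self]⟩
  · left
    obtain ⟨k, hk⟩ := exists_colorsAt_friendshipF3Coloring_eq_Icc hv
    exact ⟨k, k + 1, hk⟩
end
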